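/- Let f : (0,∞) → ℝ be operator convex. For positive definite matrices ρ_i, σ_i ∈ M_n(ℂ) and weights λ_i > 0 (i = 1,…,k), the standard f-divergence is jointly convex: S_f( Σ_i λ_i ρ_i ‖ Σ_i λ_i σ_i ) ≤ Σ_i λ_i S_f(ρ_i‖σ_i). -/

import Mathlib

open Matrix
open scoped ComplexOrder

/-- `f : (0,∞) → ℝ` is operator convex: for every size `m`, positive definite
`A B : M_m(ℂ)` and `t ∈ [0,1]`, `f(tA + (1-t)B) ≤ t f(A) + (1-t) f(B)` in the
Loewner order (`f` applied by the spectral functional calculus). -/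
def OperatorConvexOn (f : ℝ → ℝ) : Prop :=
  ∀ (m : ℕ) (A B : Matrix (Fin m) (Fin m) ℂ), A.PosDef → B.PosDef →
    ∀ t : ℝ, 0 ≤ t → t ≤ 1 →
      (t • cfc f A + (1 - t) • cfc f B - cfc f (t • A + (1 - t) • B)).PosSemidef

/-- Spectral projection of a Hermitian matrix `A` onto the eigenvalue `a`. -/
noncomputable def specProj {n : ℕ} (A : Matrix (Fin n) (Fin n) ℂ) (a : ℝ) :
    Matrix (Fin n) (Fin n) ℂ :=
  cfc (fun x : ℝ => if x = a then (1 : ℝ) else 0) A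

/-- The standard `f`-divergence of positive definite matrices:
`S_f(ρ‖σ) = Σ_{a ∈ spec ρ} Σ_{b ∈ spec σ} b·f(a/b)·Tr(P_a Q_b)`. -/
noncomputable def Sf {n : ℕ} (f : ℝ → ℝ) (ρ σ : Matrix (Fin n) (Fin n) ℂ) : ℝ :=
  ∑ᶠ a ∈ spectrum ℝ ρ, ∑ᶠ b ∈ spectrum ℝ σ,
    b * f (a / b) * (Matrix.trace (specProj ρ a * specProj σ b)).re

/-!
The two commuting matrices `1 ⊗ ρ` and `σᵀ ⊗ 1` have the joint spectral projections `Q_bᵀ ⊗ P_a`,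
and `⟨vec 1, (Q_bᵀ ⊗ P_a) vec 1⟩ = Tr (P_a Q_b)`. Hence `S_f(ρ‖σ)` is the quadratic form at `vec 1`
of the operator perspective `B^{1/2} f(B^{-1/2} A B^{-1/2}) B^{1/2}` with `A = 1 ⊗ ρ` and
`B = σᵀ ⊗ 1`, both linear in `(ρ, σ)`, and it suffices that the perspective is jointly convex.

This is the operator Jensen inequality `f (∑ Vᵢᴴ Tᵢ Vᵢ) ≤ ∑ Vᵢᴴ f(Tᵢ) Vᵢ`, where `∑ Vᵢᴴ Vᵢ = 1`, for
`Tᵢ = Bᵢ^{-1/2} Aᵢ Bᵢ^{-1/2}` and `Vᵢ = λᵢ^{1/2} Bᵢ^{1/2} (∑ λⱼ Bⱼ)^{-1/2}`. Jensen's inequality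
reduces to the case of a single isometry `V` by stacking the `Vᵢ`. There one applies operator
convexity to the midpoint of `T` and `U T U`, where `U` is the reflection through the range of `V`:
this midpoint leaves the range of `V` invariant and compresses to `Vᴴ T V` on it.
-/

open scoped Kronecker MatrixOrder

section FunctionalCalculus

lemma exists_polynomial_eqOn_of_finite {F : Type*} [Field F] (f : F → F) {s : Set F}
    (hs : s.Finite) : ∃ p : Polynomial F, s.EqOn f p.eval := by
  classical
  exact ⟨Lagrange.interpolate hs.toFinset id f, fun _ hx =>
    (Lagrange.eval_interpolate_at_node f (v := id) Function.injective_id.injOn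
      (hs.mem_toFinset.2 hx)).symm⟩

variable {R S 𝕜 m n o : Type*} [CommSemiring R] [Semiring S] [Algebra R S] [RCLike 𝕜]
  [Fintype m] [DecidableEq m] [Fintype n] [DecidableEq n] [Fintype o] [DecidableEq o]

lemma pow_mul_eq_mul_pow_of_intertwine {B : Matrix m m S} {C : Matrix n n S} {V : Matrix m n S}
    (h : B * V = V * C) (k : ℕ) : B ^ k * V = V * C ^ k := by
  induction k with
  | zero => simp
  | succ k ih =>
    rw [pow_succ', Matrix.mul_assoc, ih, ← Matrix.mul_assoc, h, Matrix.mul_assoc, pow_succ']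

lemma aeval_mul_eq_mul_aeval_of_intertwine {B : Matrix m m S} {C : Matrix n n S}
    {V : Matrix m n S} (h : B * V = V * C) (p : Polynomial R) :
    p.aeval B * V = V * p.aeval C := by
  induction p using Polynomial.induction_on' with
  | add p q hp hq => simp only [map_add, Matrix.add_mul, Matrix.mul_add, hp, hq]
  | monomial k r =>
    simp only [Polynomial.aeval_monomial, ← Algebra.smul_def, Matrix.smul_mul, Matrix.mul_smul,
      pow_mul_eq_mul_pow_of_intertwine h]

theorem cfc_mul_eq_mul_cfc_of_intertwine (f : ℝ → ℝ) {B : Matrix m m 𝕜} {C : Matrix n n 𝕜}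
    (hB : B.IsHermitian) (hC : C.IsHermitian) {V : Matrix m n 𝕜} (h : B * V = V * C) :
    cfc f B * V = V * cfc f C := by
  obtain ⟨p, hp⟩ := exists_polynomial_eqOn_of_finite f
    (B.finite_real_spectrum.union C.finite_real_spectrum)
  rw [cfc_congr (hp.mono Set.subset_union_left), cfc_congr (hp.mono Set.subset_union_right),
    cfc_polynomial p B hB.isSelfAdjoint, cfc_polynomial p C hC.isSelfAdjoint,
    aeval_mul_eq_mul_aeval_of_intertwine h]

lemma cfc_mul_eq_smul_of_mul_eq_smul (f : ℝ → ℝ) {B : Matrix m m 𝕜} (hB : B.IsHermitian)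
    {E : Matrix m m 𝕜} {c : ℝ} (h : B * E = c • E) : cfc f B * E = f c • E := by
  have hBE : B * E = E * algebraMap ℝ (Matrix m m 𝕜) c := by
    rw [h, Algebra.algebraMap_eq_smul_one, Matrix.mul_smul, Matrix.mul_one]
  rw [cfc_mul_eq_mul_cfc_of_intertwine f hB (cfc_predicate_algebraMap c) hBE, cfc_algebraMap,
    Algebra.algebraMap_eq_smul_one, Matrix.mul_smul, Matrix.mul_one]

lemma cfc_submatrix_equiv (f : ℝ → ℝ) {A : Matrix m m 𝕜} (hA : A.IsHermitian) (e : n ≃ m) :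
    cfc f (A.submatrix e e) = (cfc f A).submatrix e e := by
  have hmul_right (M : Matrix n n 𝕜) :
      M * (1 : Matrix m m 𝕜).submatrix e id = M.submatrix id e.symm := mul_submatrix_one e id M
  have hmul_left (M : Matrix m m 𝕜) :
      (1 : Matrix m m 𝕜).submatrix e id * M = M.submatrix e id :=
    one_submatrix_mul e (Equiv.refl m) M
  have h := cfc_mul_eq_mul_cfc_of_intertwine f (hA.submatrix e) hA
    (V := (1 : Matrix m m 𝕜).submatrix e id) (by rw [hmul_right, hmul_left]; ext; simp)
  rw [hmul_right, hmul_left] at h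
  ext i j
  simpa using congr_fun₂ h i (e j)

lemma cfc_blockDiagonal (f : ℝ → ℝ) {A : o → Matrix m m 𝕜} (hA : ∀ i, (A i).IsHermitian) :
    cfc f (blockDiagonal A) = blockDiagonal fun i => cfc f (A i) := by
  have hA_diag : (blockDiagonal A).IsHermitian := by
    rw [Matrix.IsHermitian, blockDiagonal_conjTranspose]
    simp_rw [(hA _).eq]
  ext p ⟨j, i⟩
  let V : Matrix (m × o) m 𝕜 := (1 : Matrix (m × o) (m × o) 𝕜).submatrix id (·, i)
  have hmul_right (M : Matrix (m × o) (m × o) 𝕜) : M * V = M.submatrix id (·, i) :=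
    mul_submatrix_one (Equiv.refl _) (·, i) M
  have hmul_left (M : Matrix m m 𝕜) (q : m × o) (l : m) :
      (V * M) q l = if q.2 = i then M q.1 l else 0 := by
    simp [V, Matrix.mul_apply, Matrix.one_apply, Prod.ext_iff, ite_and]
  have h := cfc_mul_eq_mul_cfc_of_intertwine f hA_diag (hA i) (V := V) (by
    ext q l
    rw [hmul_right, hmul_left, submatrix_apply, blockDiagonal_apply]
    aesop)
  have hpj := congr_fun₂ h p j
  rw [hmul_right, hmul_left, submatrix_apply] at hpj
  rw [blockDiagonal_apply]
  aesop

end FunctionalCalculus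

section RangeReflection

variable {𝕜 m n : Type*} [RCLike 𝕜] [DecidableEq m] [Fintype n]

/-- The reflection `2VVᴴ - 1` through the range of `V`, for an isometry `V`. Averaging a matrix with
its conjugate by this reflection discards the blocks that mix the range of `V` with its orthogonal
complement. -/
def rangeReflection (V : Matrix m n 𝕜) : Matrix m m 𝕜 :=
  (2 : 𝕜) • (V * Vᴴ) - 1

lemma rangeReflection_isHermitian (V : Matrix m n 𝕜) : (rangeReflection V).IsHermitian := by
  simp [Matrix.IsHermitian, rangeReflection]

variable [Fintype m] [DecidableEq n] {V : Matrix m n 𝕜}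

lemma rangeReflection_mul (hV : Vᴴ * V = 1) : rangeReflection V * V = V := by
  rw [rangeReflection, Matrix.sub_mul, Matrix.smul_mul, Matrix.mul_assoc, hV, Matrix.one_mul,
    Matrix.mul_one]
  module

lemma conjTranspose_mul_rangeReflection (hV : Vᴴ * V = 1) : Vᴴ * rangeReflection V = Vᴴ := by
  rw [← (rangeReflection_isHermitian V).eq, ← conjTranspose_mul, rangeReflection_mul hV]

lemma rangeReflection_mul_self (hV : Vᴴ * V = 1) :
    rangeReflection V * rangeReflection V = 1 := by
  conv_lhs => enter [1]; rw [rangeReflection]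
  rw [Matrix.sub_mul, Matrix.smul_mul, Matrix.mul_assoc, conjTranspose_mul_rangeReflection hV,
    Matrix.one_mul, rangeReflection, sub_sub_cancel]

lemma average_rangeReflection_mul (hV : Vᴴ * V = 1) (A : Matrix m m 𝕜) :
    ((1 / 2 : ℝ) • A + (1 - 1 / 2 : ℝ) • (rangeReflection V * A * rangeReflection V)) * V =
      V * (Vᴴ * A * V) := by
  have hreflect : rangeReflection V * A * rangeReflection V * V =
      (2 : 𝕜) • (V * (Vᴴ * A * V)) - A * V := by
    rw [Matrix.mul_assoc, rangeReflection_mul hV, rangeReflection, Matrix.mul_assoc,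
      Matrix.sub_mul, Matrix.smul_mul, Matrix.one_mul]
    simp only [Matrix.mul_assoc]
  rw [Matrix.add_mul, Matrix.smul_mul, Matrix.smul_mul, hreflect, two_smul]
  module

end RangeReflection

section LoewnerOrder

lemma posDef_blockDiagonal {𝕜 m o : Type*} [RCLike 𝕜] [Finite m] [Finite o] [DecidableEq o]
    {A : o → Matrix m m 𝕜} (hA : ∀ i, (A i).PosDef) : (blockDiagonal A).PosDef := by
  classical
  have := Fintype.ofFinite m
  have := Fintype.ofFinite o
  choose b hb hAb using fun i =>
    CStarAlgebra.isStrictlyPositive_iff_eq_star_mul_self.1 (hA i).isStrictlyPositive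
  refine (CStarAlgebra.isStrictlyPositive_iff_eq_star_mul_self.2
    ⟨blockDiagonal b, (Pi.isUnit_iff.2 hb).map (blockDiagonalRingHom m o 𝕜), ?_⟩).posDef
  rw [star_eq_conjTranspose, blockDiagonal_conjTranspose, ← blockDiagonal_mul]
  exact congr_arg blockDiagonal (funext hAb)

variable {𝕜 m n : Type*} [RCLike 𝕜] [Fintype m] {M N : Matrix m m 𝕜}

lemma conjTranspose_mul_mul_le_of_le [Finite n] (hMN : M ≤ N) (V : Matrix m n 𝕜) :
    Vᴴ * M * V ≤ Vᴴ * N * V := by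
  have := Fintype.ofFinite n
  rw [le_iff, ← Matrix.sub_mul, ← Matrix.mul_sub]
  exact (le_iff.1 hMN).conjTranspose_mul_mul_same V

lemma re_dotProduct_mulVec_le_of_le (hMN : M ≤ N) (x : m → 𝕜) :
    RCLike.re (star x ⬝ᵥ (M *ᵥ x)) ≤ RCLike.re (star x ⬝ᵥ (N *ᵥ x)) := by
  rw [← sub_nonneg, ← map_sub, ← dotProduct_sub, ← sub_mulVec]
  exact (le_iff.1 hMN).re_dotProduct_nonneg x

end LoewnerOrder

section OperatorJensen

variable {ι κ s : Type*} [Fintype ι] [DecidableEq ι] [Fintype κ] [DecidableEq κ]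
  [Fintype s] {f : ℝ → ℝ}

lemma OperatorConvexOn.cfc_convexCombination_le (hf : OperatorConvexOn f) {A B : Matrix ι ι ℂ}
    (hA : A.PosDef) (hB : B.PosDef) {t : ℝ} (ht₀ : 0 ≤ t) (ht₁ : t ≤ 1) :
    cfc f (t • A + (1 - t) • B) ≤ t • cfc f A + (1 - t) • cfc f B := by
  let e := (Fintype.equivFin ι).symm
  have hAB : (t • A + (1 - t) • B).IsHermitian :=
    (IsSelfAdjoint.smul (.all t) hA.isHermitian).add (IsSelfAdjoint.smul (.all _) hB.isHermitian)
  have h := hf _ _ _ (hA.submatrix e.injective) (hB.submatrix e.injective) t ht₀ ht₁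
  have hsub : t • A.submatrix e e + (1 - t) • B.submatrix e e =
      (t • A + (1 - t) • B).submatrix e e := rfl
  rw [hsub, cfc_submatrix_equiv f hA.isHermitian, cfc_submatrix_equiv f hB.isHermitian,
    cfc_submatrix_equiv f hAB] at h
  exact (posSemidef_submatrix_equiv e).1 h

theorem OperatorConvexOn.cfc_conjugate_isometry_le (hf : OperatorConvexOn f) {A : Matrix ι ι ℂ}
    (hA : A.PosDef) {V : Matrix ι κ ℂ} (hV : Vᴴ * V = 1) :
    cfc f (Vᴴ * A * V) ≤ Vᴴ * cfc f A * V := by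
  set U := rangeReflection V
  have hUU : U * U = 1 := rangeReflection_mul_self hV
  have hUAU : (U * A * U).PosDef := by
    rw [← (IsUnit.of_mul_eq_one U hUU).posDef_star_left_conjugate_iff] at hA
    rwa [star_eq_conjTranspose, (rangeReflection_isHermitian V).eq] at hA
  have hcfc_UAU : cfc f (U * A * U) = U * cfc f A * U := by
    rw [← cfc_mul_eq_mul_cfc_of_intertwine f hUAU.isHermitian hA.isHermitian (V := U)
      (by rw [Matrix.mul_assoc, hUU, Matrix.mul_one]), Matrix.mul_assoc (cfc f _), hUU,
      Matrix.mul_one]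
  set B := (1 / 2 : ℝ) • A + (1 - 1 / 2 : ℝ) • (U * A * U)
  have hB : B.IsHermitian :=
    ((hA.smul (by norm_num)).add (hUAU.smul (by norm_num))).isHermitian
  have hcfc_B : cfc f B * V = V * cfc f (Vᴴ * A * V) :=
    cfc_mul_eq_mul_cfc_of_intertwine f hB (isHermitian_conjTranspose_mul_mul V hA.isHermitian)
      (average_rangeReflection_mul hV A)
  calc cfc f (Vᴴ * A * V) = Vᴴ * cfc f B * V := by
        rw [Matrix.mul_assoc Vᴴ (cfc f B), hcfc_B, ← Matrix.mul_assoc, hV, Matrix.one_mul]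
    _ ≤ Vᴴ * ((1 / 2 : ℝ) • cfc f A + (1 - 1 / 2 : ℝ) • cfc f (U * A * U)) * V :=
        conjTranspose_mul_mul_le_of_le
          (hf.cfc_convexCombination_le hA hUAU (by norm_num) (by norm_num)) V
    _ = Vᴴ * cfc f A * V := by
        rw [Matrix.mul_assoc, hcfc_UAU, average_rangeReflection_mul hV, ← Matrix.mul_assoc, hV,
          Matrix.one_mul]

theorem OperatorConvexOn.cfc_sum_conjugate_le (hf : OperatorConvexOn f) {A : s → Matrix ι ι ℂ}
    (hA : ∀ i, (A i).PosDef) {V : s → Matrix ι κ ℂ} (hV : ∑ i, (V i)ᴴ * V i = 1) :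
    cfc f (∑ i, (V i)ᴴ * A i * V i) ≤ ∑ i, (V i)ᴴ * cfc f (A i) * V i := by
  classical
  let W : Matrix (ι × s) κ ℂ := of fun p j => V p.2 p.1 j
  have hW (M : s → Matrix ι ι ℂ) : Wᴴ * blockDiagonal M * W = ∑ i, (V i)ᴴ * M i * V i := by
    have hMW (p : ι × s) (j : κ) : (blockDiagonal M * W) p j = (M p.2 * V p.2) p.1 j := by
      simp [W, Matrix.mul_apply, blockDiagonal_apply, Fintype.sum_prod_type]
    ext j l
    rw [Matrix.mul_assoc, Matrix.mul_apply, Fintype.sum_prod_type_right, Matrix.sum_apply]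
    simp only [hMW, Matrix.mul_assoc, Matrix.mul_apply (M := (V _)ᴴ)]
    rfl
  have hW_isometry : Wᴴ * W = 1 := by simpa [← hV] using hW 1
  rw [← hW, ← hW, ← cfc_blockDiagonal f fun i => (hA i).isHermitian]
  exact hf.cfc_conjugate_isometry_le (posDef_blockDiagonal hA) hW_isometry

end OperatorJensen

section Perspective

variable {α 𝕜 m s : Type*} [CommRing α] [RCLike 𝕜]

lemma posDef_sum_smul [Fintype s] [Nonempty s] {w : s → ℝ} (hw : ∀ i, 0 < w i)
    {A : s → Matrix m m 𝕜} (hA : ∀ i, (A i).PosDef) : (∑ i, w i • A i).PosDef :=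
  posDef_sum Finset.univ_nonempty fun i _ => (hA i).smul (hw i)

variable [Fintype m]

lemma sum_conjTranspose_mul_mul_sqrt_smul [Fintype s] {w : s → ℝ} (hw : ∀ i, 0 ≤ w i)
    {R : s → Matrix m m 𝕜} (hR : ∀ i, (R i).IsHermitian) {T : Matrix m m 𝕜}
    (hT : T.IsHermitian) (M : s → Matrix m m 𝕜) :
    ∑ i, (√(w i) • (R i * T))ᴴ * M i * (√(w i) • (R i * T)) =
      T * (∑ i, w i • (R i * M i * R i)) * T := by
  rw [Matrix.mul_sum, Matrix.sum_mul]
  refine Finset.sum_congr rfl fun i _ => ?_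
  simp only [conjTranspose_smul, conjTranspose_mul, (hR i).eq, hT.eq, star_trivial,
    Matrix.smul_mul, Matrix.mul_smul, smul_smul, Real.mul_self_sqrt (hw i), Matrix.mul_assoc]

variable [DecidableEq m]

lemma mul_inv_mul_mul_inv_mul {S : Matrix m m α} (hS : IsUnit S.det) (M : Matrix m m α) :
    S * (S⁻¹ * M * S⁻¹) * S = M := by
  rw [Matrix.mul_assoc, nonsing_inv_mul_cancel_right _ _ hS, mul_nonsing_inv_cancel_left _ _ hS]

variable {A B : Matrix m m 𝕜}

/-- The operator perspective `B^{1/2} f(B^{-1/2} A B^{-1/2}) B^{1/2}` of `f`, a noncommutative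
version of `(a, b) ↦ b f(a / b)`. -/
noncomputable def perspective (f : ℝ → ℝ) (A B : Matrix m m 𝕜) : Matrix m m 𝕜 :=
  CFC.sqrt B * cfc f ((CFC.sqrt B)⁻¹ * A * (CFC.sqrt B)⁻¹) * CFC.sqrt B

lemma posDef_sqrt (hB : B.PosDef) : (CFC.sqrt B).PosDef :=
  (IsStrictlyPositive.sqrt B hB.isStrictlyPositive).posDef

lemma isUnit_det_sqrt (hB : B.PosDef) : IsUnit (CFC.sqrt B).det :=
  (isUnit_iff_isUnit_det _).1 (posDef_sqrt hB).isUnit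

lemma sqrt_mul_eq_smul (hB : B.PosSemidef) {E : Matrix m m 𝕜} {b : ℝ} (hBE : B * E = b • E) :
    CFC.sqrt B * E = √b • E := by
  rw [CFC.sqrt_eq_real_sqrt B hB.nonneg, cfcₙ_eq_cfc]
  exact cfc_mul_eq_smul_of_mul_eq_smul _ hB.isHermitian hBE

lemma inv_sqrt_mul_eq_smul (hB : B.PosDef) {E : Matrix m m 𝕜} {b : ℝ} (hb : 0 < b)
    (hBE : B * E = b • E) : (CFC.sqrt B)⁻¹ * E = (√b)⁻¹ • E := by
  have hE : E = (√b)⁻¹ • (CFC.sqrt B * E) := by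
    rw [sqrt_mul_eq_smul hB.posSemidef hBE, inv_smul_smul₀ (Real.sqrt_pos.2 hb).ne']
  conv_lhs => rw [hE]
  rw [Matrix.mul_smul, nonsing_inv_mul_cancel_left _ _ (isUnit_det_sqrt hB)]

lemma perspective_mul_eq_smul (f : ℝ → ℝ) (hA : A.IsHermitian) (hB : B.PosDef)
    {E : Matrix m m 𝕜} {a b : ℝ} (hb : 0 < b) (hAE : A * E = a • E) (hBE : B * E = b • E) :
    perspective f A B * E = (b * f (a / b)) • E := by
  set S := CFC.sqrt B with hS
  have hSE : S * E = √b • E := sqrt_mul_eq_smul hB.posSemidef hBE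
  have hS_inv_E : S⁻¹ * E = (√b)⁻¹ • E := inv_sqrt_mul_eq_smul hB hb hBE
  have hT : (S⁻¹ * A * S⁻¹).IsHermitian := by
    have h := isHermitian_mul_mul_conjTranspose S⁻¹ hA
    rwa [(posDef_sqrt hB).isHermitian.inv.eq] at h
  have hTE : S⁻¹ * A * S⁻¹ * E = (a / b) • E := by
    simp only [Matrix.mul_assoc, hS_inv_E, hAE, Matrix.mul_smul, smul_smul]
    rw [mul_right_comm, ← mul_inv, Real.mul_self_sqrt hb.le, inv_mul_eq_div]
  rw [perspective, ← hS, Matrix.mul_assoc, hSE, Matrix.mul_smul, Matrix.mul_assoc,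
    cfc_mul_eq_smul_of_mul_eq_smul f hT hTE, Matrix.mul_smul, hSE, smul_smul, smul_smul,
    mul_right_comm, Real.mul_self_sqrt hb.le]

theorem OperatorConvexOn.perspective_sum_le [Fintype s] [Nonempty s] {f : ℝ → ℝ}
    (hf : OperatorConvexOn f) {A B : s → Matrix m m ℂ} (hA : ∀ i, (A i).PosDef)
    (hB : ∀ i, (B i).PosDef) {w : s → ℝ} (hw : ∀ i, 0 < w i) :
    perspective f (∑ i, w i • A i) (∑ i, w i • B i) ≤ ∑ i, w i • perspective f (A i) (B i) := by
  set S := CFC.sqrt (∑ i, w i • B i)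
  have hsum_B := posDef_sum_smul hw hB
  have hS : S.PosDef := posDef_sqrt hsum_B
  have hS_det : IsUnit S.det := isUnit_det_sqrt hsum_B
  let R i := CFC.sqrt (B i)
  have hR i : (R i).PosDef := posDef_sqrt (hB i)
  have hR_mul_self i : R i * R i = B i := CFC.sqrt_mul_sqrt_self _ (hB i).posSemidef.nonneg
  have hS_mul_self : S * S = ∑ i, w i • B i :=
    CFC.sqrt_mul_sqrt_self _ hsum_B.posSemidef.nonneg
  have hsum (M : s → Matrix m m ℂ) := sum_conjTranspose_mul_mul_sqrt_smul (fun i => (hw i).le)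
    (fun i => (hR i).isHermitian) hS.isHermitian.inv M
  have hA_normalized i : ((R i)⁻¹ * A i * (R i)⁻¹).PosDef := by
    have h := (hR i).inv.isUnit.posDef_star_right_conjugate_iff.2 (hA i)
    rwa [star_eq_conjTranspose, (hR i).inv.isHermitian.eq] at h
  have hV : ∑ i, (√(w i) • (R i * S⁻¹))ᴴ * (√(w i) • (R i * S⁻¹)) = 1 := by
    have h := hsum 1
    simp only [Pi.one_apply, Matrix.mul_one, hR_mul_self, ← hS_mul_self] at h
    rw [h, nonsing_inv_mul_cancel_left _ _ hS_det, mul_nonsing_inv _ hS_det]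
  unfold perspective
  have h := conjTranspose_mul_mul_le_of_le (hf.cfc_sum_conjugate_le hA_normalized hV) S
  rw [hsum, hsum, hS.isHermitian.eq, mul_inv_mul_mul_inv_mul hS_det] at h
  simpa only [R, mul_inv_mul_mul_inv_mul (isUnit_det_sqrt (hB _))] using h

end Perspective

section Kronecker

variable {R l m n o s : Type*} [NonUnitalNonAssocSemiring R]

lemma kronecker_sum (t : Finset s) (A : Matrix l m R) (B : s → Matrix n o R) :
    A ⊗ₖ (∑ i ∈ t, B i) = ∑ i ∈ t, A ⊗ₖ B i := by
  ext
  simp [Matrix.sum_apply, Finset.mul_sum]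

lemma sum_kronecker (t : Finset s) (A : s → Matrix l m R) (B : Matrix n o R) :
    (∑ i ∈ t, A i) ⊗ₖ B = ∑ i ∈ t, A i ⊗ₖ B := by
  ext
  simp [Matrix.sum_apply, Finset.sum_mul]

lemma dotProduct_kronecker_mulVec_vec_one {𝕜 : Type*} [RCLike 𝕜] [Fintype m] [DecidableEq m]
    (P Q : Matrix m m 𝕜) : star (vec 1) ⬝ᵥ ((Qᵀ ⊗ₖ P) *ᵥ vec 1) = (P * Q).trace := by
  rw [kronecker_mulVec_vec, star_vec_dotProduct_vec]
  simp

end Kronecker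

section Divergence

variable {n : ℕ} {f : ℝ → ℝ} {ρ σ : Matrix (Fin n) (Fin n) ℂ}

lemma mul_specProj (hρ : ρ.IsHermitian) (a : ℝ) : ρ * specProj ρ a = a • specProj ρ a := by
  have hcont (g : ℝ → ℝ) : ContinuousOn g (spectrum ℝ ρ) := ρ.finite_real_spectrum.continuousOn g
  nth_rw 1 [← cfc_id' ℝ ρ hρ.isSelfAdjoint]
  rw [specProj, ← cfc_mul _ _ ρ (hcont _) (hcont _), ← cfc_smul a _ ρ (hcont _)]
  refine cfc_congr fun x _ => ?_
  aesop

lemma specProj_mul (hρ : ρ.IsHermitian) (a : ℝ) : specProj ρ a * ρ = a • specProj ρ a := by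
  rw [← mul_specProj hρ]
  exact ((Commute.refl ρ).cfc_real _).eq

lemma sum_specProj (hρ : ρ.IsHermitian) :
    ∑ a ∈ ρ.finite_real_spectrum.toFinset, specProj ρ a = 1 := by
  simp only [specProj]
  rw [← cfc_sum (hf := fun _ _ => ρ.finite_real_spectrum.continuousOn _),
    ← cfc_one ℝ ρ hρ.isSelfAdjoint]
  refine cfc_congr fun x hx => ?_
  simp [hx]

lemma one_kronecker_mul_specProj (hρ : ρ.IsHermitian) (a b : ℝ) :
    (1 ⊗ₖ ρ) * ((specProj σ b)ᵀ ⊗ₖ specProj ρ a) = a • ((specProj σ b)ᵀ ⊗ₖ specProj ρ a) := by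
  rw [← mul_kronecker_mul, Matrix.one_mul, mul_specProj hρ, kronecker_smul]

lemma transpose_kronecker_one_mul_specProj (hσ : σ.IsHermitian) (a b : ℝ) :
    (σᵀ ⊗ₖ 1) * ((specProj σ b)ᵀ ⊗ₖ specProj ρ a) = b • ((specProj σ b)ᵀ ⊗ₖ specProj ρ a) := by
  rw [← mul_kronecker_mul, Matrix.one_mul, ← transpose_mul, specProj_mul hσ, transpose_smul,
    smul_kronecker]

lemma sum_specProj_kronecker_specProj (hρ : ρ.IsHermitian) (hσ : σ.IsHermitian) :
    ∑ a ∈ ρ.finite_real_spectrum.toFinset, ∑ b ∈ σ.finite_real_spectrum.toFinset,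
      (specProj σ b)ᵀ ⊗ₖ specProj ρ a = 1 := by
  simp_rw [← sum_kronecker, ← transpose_sum, ← kronecker_sum]
  rw [sum_specProj hρ, sum_specProj hσ, transpose_one, one_kronecker_one]

lemma perspective_kronecker_eq_sum (hρ : ρ.PosDef) (hσ : σ.PosDef) :
    perspective f (1 ⊗ₖ ρ) (σᵀ ⊗ₖ 1) =
      ∑ a ∈ ρ.finite_real_spectrum.toFinset, ∑ b ∈ σ.finite_real_spectrum.toFinset,
        (b * f (a / b)) • ((specProj σ b)ᵀ ⊗ₖ specProj ρ a) := by
  rw [← Matrix.mul_one (perspective _ _ _),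
    ← sum_specProj_kronecker_specProj hρ.isHermitian hσ.isHermitian, Matrix.mul_sum]
  refine Finset.sum_congr rfl fun a _ => ?_
  rw [Matrix.mul_sum]
  refine Finset.sum_congr rfl fun b hb => ?_
  have hb_pos : 0 < b := hσ.isStrictlyPositive.spectrum_pos (by simpa using hb)
  exact perspective_mul_eq_smul f (PosDef.one.kronecker hρ).isHermitian
    (hσ.transpose.kronecker PosDef.one) hb_pos (one_kronecker_mul_specProj hρ.isHermitian a b)
    (transpose_kronecker_one_mul_specProj hσ.isHermitian a b)

theorem Sf_eq_re_dotProduct_perspective (hρ : ρ.PosDef) (hσ : σ.PosDef) :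
    Sf f ρ σ = (star (vec 1) ⬝ᵥ (perspective f (1 ⊗ₖ ρ) (σᵀ ⊗ₖ 1) *ᵥ vec 1)).re := by
  simp only [Sf, finsum_mem_eq_finite_toFinset_sum _ ρ.finite_real_spectrum,
    finsum_mem_eq_finite_toFinset_sum _ σ.finite_real_spectrum, perspective_kronecker_eq_sum hρ hσ,
    sum_mulVec, smul_mulVec, dotProduct_sum, dotProduct_smul, dotProduct_kronecker_mulVec_vec_one,
    Complex.re_sum, Complex.smul_re, smul_eq_mul]

lemma Sf_zero_right : Sf f ρ 0 = 0 := by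
  refine finsum_mem_eq_zero_of_forall_eq_zero fun a _ =>
    finsum_mem_eq_zero_of_forall_eq_zero fun b hb => ?_
  have hb_zero : b = 0 := by
    by_contra hb_ne
    rw [spectrum.mem_iff, sub_zero] at hb
    exact hb ((Ne.isUnit hb_ne).map (algebraMap ℝ _))
  rw [hb_zero, zero_mul, zero_mul]

end Divergence

/-- joint convexity of the standard `f`-divergence for operator convex `f`. -/
theorem stmt13 {n k : ℕ} (f : ℝ → ℝ) (hf : OperatorConvexOn f)
    (ρ σ : Fin k → Matrix (Fin n) (Fin n) ℂ) (lam : Fin k → ℝ)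
    (hρ : ∀ i, (ρ i).PosDef) (hσ : ∀ i, (σ i).PosDef) (hlam : ∀ i, 0 < lam i) :
    Sf f (∑ i, lam i • ρ i) (∑ i, lam i • σ i) ≤ ∑ i, lam i * Sf f (ρ i) (σ i) := by
  rcases isEmpty_or_nonempty (Fin k) with hk | hk
  · simp [Sf_zero_right]
  rw [Sf_eq_re_dotProduct_perspective (posDef_sum_smul hlam hρ) (posDef_sum_smul hlam hσ)]
  simp_rw [Sf_eq_re_dotProduct_perspective (hρ _) (hσ _), transpose_sum, transpose_smul,
    sum_kronecker, kronecker_sum, smul_kronecker, kronecker_smul]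
  have hconvex := hf.perspective_sum_le
    (fun i => (PosDef.one (n := Fin n)).kronecker (hρ i))
    (fun i => (hσ i).transpose.kronecker (PosDef.one (n := Fin n))) hlam
  have h := re_dotProduct_mulVec_le_of_le hconvex (vec 1)
  simpa only [sum_mulVec, smul_mulVec, dotProduct_sum, dotProduct_smul, RCLike.re_to_complex,
    Complex.re_sum, Complex.smul_re, smul_eq_mul] using h
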